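/- For every lattice path ν, the rotation poset of ν-trees is a lattice: every pair of ν-trees has a greatest lower bound and a least upper bound in the rotation poset. -/

import Mathlib

open scoped Classical

/-! Lattice paths: `true` = north step, `false` = east step. -/

def eastSteps (ν : List Bool) : ℕ := ν.count false
def northSteps (ν : List Bool) : ℕ := ν.count true

/-- Height at which the path first reaches abscissa `x`. -/
def heightAt : List Bool → ℕ → ℕ
  | _, 0 => 0
  | [], _ + 1 => 0
  | true :: rest, x + 1 => heightAt rest (x + 1) + 1
  | false :: rest, x + 1 => heightAt rest x

/-- Lattice point of a path after `i` steps. -/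
def pointAt (μ : List Bool) (i : ℕ) : ℕ × ℕ :=
  ((μ.take i).count false, (μ.take i).count true)

/-- The set `A_ν` of lattice points weakly above `ν`. -/
def APts (ν : List Bool) : Set (ℕ × ℕ) :=
  {p | p.1 ≤ eastSteps ν ∧ heightAt ν p.1 ≤ p.2 ∧ p.2 ≤ northSteps ν}

def Incompatible (ν : List Bool) (p q : ℕ × ℕ) : Prop :=
  (p.1 < q.1 ∧ p.2 < q.2 ∧ (q.1, p.2) ∈ APts ν) ∨
    (q.1 < p.1 ∧ q.2 < p.2 ∧ (p.1, q.2) ∈ APts ν)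

def Compatible (ν : List Bool) (p q : ℕ × ℕ) : Prop := ¬ Incompatible ν p q

def IsNuTree (ν : List Bool) (T : Set (ℕ × ℕ)) : Prop :=
  T ⊆ APts ν ∧ T.Pairwise (Compatible ν) ∧
    ∀ T', T' ⊆ APts ν → T'.Pairwise (Compatible ν) → T ⊆ T' → T' = T

def IsRightRotationAt (T T' : Set (ℕ × ℕ)) (q q' : ℕ × ℕ) : Prop :=
  ∃ x y x'' y', q = (x, y) ∧ q' = (x'', y') ∧ x < x'' ∧ y < y' ∧
    (x, y) ∈ T ∧ (x, y') ∈ T ∧ (x'', y) ∈ T ∧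
    (∀ b, y < b → b < y' → (x, b) ∉ T) ∧
    (∀ a, x < a → a < x'' → (a, y) ∉ T) ∧
    (∀ a, x < a → a < x'' → (a, y') ∉ T) ∧
    (∀ b, y < b → b < y' → (x'', b) ∉ T) ∧
    T' = (T \ {(x, y)}) ∪ {(x'', y')}

def IsRightRotation (T T' : Set (ℕ × ℕ)) : Prop :=
  ∃ q q', IsRightRotationAt T T' q q'

/-- Order relation of the rotation poset of ν-trees. -/
def TreeLE (ν : List Bool) : Set (ℕ × ℕ) → Set (ℕ × ℕ) → Prop :=
  Relation.ReflTransGen fun A B => IsNuTree ν A ∧ IsNuTree ν B ∧ IsRightRotation A B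

def IsNuPath (ν μ : List Bool) : Prop :=
  eastSteps μ = eastSteps ν ∧ northSteps μ = northSteps ν ∧
    ∀ i ≤ μ.length, pointAt μ i ∈ APts ν

noncomputable def horiz (ν : List Bool) (p : ℕ × ℕ) : ℕ :=
  sSup {k | (p.1 + k, p.2) ∈ APts ν}

/-- Covering relation of the ν-Tamari lattice. -/
def TamariCover (ν μ μ' : List Bool) : Prop :=
  IsNuPath ν μ ∧ IsNuPath ν μ' ∧
    ∃ i j, 0 < i ∧ i < j ∧ j ≤ μ.length ∧
      μ.getD (i - 1) true = false ∧ μ.getD i false = true ∧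
      horiz ν (pointAt μ j) = horiz ν (pointAt μ i) ∧
      (∀ k, i < k → k < j → horiz ν (pointAt μ k) ≠ horiz ν (pointAt μ i)) ∧
      μ' = μ.take (i - 1) ++ (μ.drop i).take (j - i) ++ [false] ++ μ.drop j

def TamariLE (ν : List Bool) : List Bool → List Bool → Prop :=
  Relation.ReflTransGen (TamariCover ν)

/-! Flushing maps -/

def rowAvail (ν : List Bool) (y : ℕ) : List ℕ :=
  ((List.range (eastSteps ν + 1)).filter fun x => decide (heightAt ν x ≤ y)).reverse

def pointsAtHeight (μ : List Bool) (y : ℕ) : ℕ :=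
  ((List.range (μ.length + 1)).filter fun i => decide ((μ.take i).count true = y)).length

def rflushAux (ν : List Bool) : List ℕ → ℕ → List ℕ → List (ℕ × ℕ)
  | [], _, _ => []
  | c :: rest, y, forbidden =>
    let placed := ((rowAvail ν y).filter fun x => decide (x ∉ forbidden)).take c
    placed.map (fun x => (x, y)) ++ rflushAux ν rest (y + 1) (forbidden ++ placed.dropLast)

/-- Right-flushing map `R`. -/
def Rflush (ν μ : List Bool) : Set (ℕ × ℕ) :=
  {p | p ∈ rflushAux ν ((List.range (northSteps ν + 1)).map (pointsAtHeight μ)) 0 []}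

def lflushAux (m : ℕ) : List ℕ → ℕ → List ℕ → List (ℕ × ℕ)
  | [], _, _ => []
  | c :: rest, y, forbidden =>
    let placed := ((List.range (m + 1)).filter fun x => decide (x ∉ forbidden)).take c
    placed.map (fun x => (x, y)) ++ lflushAux m rest (y + 1) (forbidden ++ placed.dropLast)

noncomputable def rowCount (T : Set (ℕ × ℕ)) (y : ℕ) : ℕ := {x | (x, y) ∈ T}.ncard

/-- Left-flushing map `L`. -/
noncomputable def Lflush (ν : List Bool) (T : Set (ℕ × ℕ)) : Set (ℕ × ℕ) :=
  {p | p ∈ lflushAux (eastSteps ν) ((List.range (northSteps ν + 1)).map (rowCount T)) 0 []}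

def pathPointSet (μ : List Bool) : Set (ℕ × ℕ) := {p | ∃ i ≤ μ.length, pointAt μ i = p}

/-! Bracket vectors (0-indexed positions `0,…,ℓ`). -/

noncomputable def fpos (ν : List Bool) (k : ℕ) : ℕ :=
  sSup {i | i ≤ ν.length ∧ (ν.take i).count true = k}

def bmin (ν : List Bool) : List ℕ :=
  (List.range (ν.length + 1)).map fun i => (ν.take i).count true

def IsBracketVector (ν : List Bool) (b : List ℕ) : Prop :=
  b.length = ν.length + 1 ∧
    (∀ k ≤ northSteps ν, b.getD (fpos ν k) 0 = k) ∧
    (∀ i < b.length, (bmin ν).getD i 0 ≤ b.getD i 0 ∧ b.getD i 0 ≤ northSteps ν) ∧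
    ∀ i j k, i < j → j < k → k < b.length →
      ¬(b.getD i 0 = b.getD k 0 ∧ b.getD i 0 < b.getD j 0)

noncomputable def leftChild (T : Set (ℕ × ℕ)) (p : ℕ × ℕ) : Option (ℕ × ℕ) :=
  if ∃ b, (p.1, b) ∈ T ∧ b < p.2 then some (p.1, sSup {b | (p.1, b) ∈ T ∧ b < p.2})
  else none

noncomputable def rightChild (T : Set (ℕ × ℕ)) (p : ℕ × ℕ) : Option (ℕ × ℕ) :=
  if ∃ a, (a, p.2) ∈ T ∧ p.1 < a then
    if ∃ b, (sInf {a | (a, p.2) ∈ T ∧ p.1 < a}, b) ∈ T ∧ p.2 < b then none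
    else some (sInf {a | (a, p.2) ∈ T ∧ p.1 < a}, p.2)
  else none

noncomputable def inorderAux (T : Set (ℕ × ℕ)) : ℕ → ℕ × ℕ → List (ℕ × ℕ)
  | 0, _ => []
  | fuel + 1, p =>
    (match leftChild T p with
      | none => []
      | some l => inorderAux T fuel l) ++ p ::
      (match rightChild T p with
        | none => []
        | some r => inorderAux T fuel r)

/-- Bracket vector of a ν-tree: y-coordinates read in in-order from the root `(0,n)`. -/
noncomputable def bracketOfTree (ν : List Bool) (T : Set (ℕ × ℕ)) : List ℕ :=
  (inorderAux T T.ncard (0, northSteps ν)).map Prod.snd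

noncomputable def bracketAssign (ν μ : List Bool) : List (ℕ × ℕ) :=
  ((List.range (northSteps ν + 1)).foldl
    (fun (st : List (ℕ × ℕ) × List ℕ) k =>
      let picked := ((st.2.filter fun i => decide (i ≤ fpos ν k)).reverse).take
        (pointsAtHeight μ k)
      (st.1 ++ picked.map fun i => (i, k), st.2.filter fun i => decide (i ∉ picked)))
    ([], List.range (ν.length + 1))).1

/-- Bracket vector of a ν-path. -/
noncomputable def bracketOfPath (ν μ : List Bool) : List ℕ :=
  (List.range (ν.length + 1)).map fun i => ((bracketAssign ν μ).lookup i).getD 0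

/-- Componentwise order on (equal length) integer vectors. -/
def listLE (b b' : List ℕ) : Prop :=
  b.length = b'.length ∧ ∀ i, b.getD i 0 ≤ b'.getD i 0

/-! Reversal -/

def revPath (ν : List Bool) : List Bool := ν.reverse.map fun s => !s

def revTree (ν : List Bool) (T : Set (ℕ × ℕ)) : Set (ℕ × ℕ) :=
  (fun p : ℕ × ℕ => (northSteps ν - p.2, eastSteps ν - p.1)) '' T

/-! Pipe dreams and subword complexes -/

def dOf (ν : List Bool) (p : ℕ × ℕ) : ℕ := p.1 + (northSteps ν - p.2)

def labelPerm (ν : List Bool) (p : ℕ × ℕ) : Equiv.Perm ℕ :=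
  Equiv.swap (dOf ν p + 1) (dOf ν p + 2)

/-- The points of `A_ν` in reading order: rows from bottom to top, each left to right. -/
def readingList (ν : List Bool) : List (ℕ × ℕ) :=
  ((List.range (northSteps ν + 1)).map fun y =>
    ((List.range (eastSteps ν + 1)).filter fun x => decide (heightAt ν x ≤ y)).map
      fun x => (x, y)).flatten

/-- The minimal ν-tree. -/
def TminSet (ν : List Bool) : Set (ℕ × ℕ) :=
  {p | p ∈ APts ν ∧ (p.1 = 0 ∨ ∃ i < ν.length, ν.getD i true = false ∧ p = pointAt ν (i + 1))}

noncomputable def prodOver (ν : List Bool) (C : Set (ℕ × ℕ)) : Equiv.Perm ℕ :=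
  (((readingList ν).filter fun p => decide (p ∈ C)).map (labelPerm ν)).prod

/-- Coxeter length: number of inversions. -/
noncomputable def lenInv (π : Equiv.Perm ℕ) : ℕ :=
  {q : ℕ × ℕ | q.1 < q.2 ∧ π q.2 < π q.1}.ncard

noncomputable def piNu (ν : List Bool) : Equiv.Perm ℕ := prodOver ν (APts ν \ TminSet ν)

def Qword (ν : List Bool) : List (Equiv.Perm ℕ) := (readingList ν).map (labelPerm ν)

noncomputable def prodAt (Q : List (Equiv.Perm ℕ)) (P : Finset ℕ) : Equiv.Perm ℕ :=
  (((List.range Q.length).filter fun i => decide (i ∈ P)).map fun i => Q.getD i 1).prod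

def IsFacet (Q : List (Equiv.Perm ℕ)) (π : Equiv.Perm ℕ) (I : Finset ℕ) : Prop :=
  I ⊆ Finset.range Q.length ∧
    prodAt Q (Finset.range Q.length \ I) = π ∧
    (Finset.range Q.length \ I).card = lenInv π

def IncFlip (Q : List (Equiv.Perm ℕ)) (π : Equiv.Perm ℕ) (I J : Finset ℕ) : Prop :=
  IsFacet Q π I ∧ IsFacet Q π J ∧ ∃ i ∈ I, ∃ j ∈ J, i < j ∧ I.erase i = J.erase j

def FlipLE (Q : List (Equiv.Perm ℕ)) (π : Equiv.Perm ℕ) : Finset ℕ → Finset ℕ → Prop :=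
  Relation.ReflTransGen (IncFlip Q π)

/-- The maximal ν-tree. -/
def TmaxSet (ν : List Bool) : Set (ℕ × ℕ) :=
  {p | (p.1 ≤ eastSteps ν ∧ p.2 = northSteps ν) ∨ ∃ i < ν.length, ν.getD i false = true ∧ p = pointAt ν i}

theorem heightAt_le_north (ν : List Bool) : ∀ x, heightAt ν x ≤ northSteps ν := by
  induction ν with
  | nil => intro x; cases x <;> simp [heightAt]
  | cons b r ih =>
    intro x
    cases x with
    | zero => simp [heightAt]
    | succ x =>
      cases b with
      | true => have := ih (x+1); simp [heightAt, northSteps] at *; omega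
      | false => have := ih x; simp [heightAt, northSteps] at *; omega

theorem heightAt_zero (ν : List Bool) : heightAt ν 0 = 0 := by
  cases ν <;> simp [heightAt]

theorem heightAt_succ_mono (ν : List Bool) :
    ∀ x, x + 1 ≤ eastSteps ν → heightAt ν x ≤ heightAt ν (x + 1) := by
  induction ν with
  | nil => intro x hx; simp [eastSteps] at hx
  | cons b r ih =>
    intro x hx
    cases x with
    | zero => simp [heightAt_zero]
    | succ x =>
      cases b with
      | true =>
        have := ih (x+1) (by simpa [eastSteps] using hx)
        simp [heightAt] at *; omega
      | false =>
        have := ih x (by simpa [eastSteps] using hx)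
        simp [heightAt] at *; omega

theorem heightAt_mono (ν : List Bool) {x y : ℕ} (hxy : x ≤ y) (hy : y ≤ eastSteps ν) :
    heightAt ν x ≤ heightAt ν y := by
  induction y, hxy using Nat.le_induction with
  | base => exact le_rfl
  | succ y hxy ih => exact (ih (by omega)).trans (heightAt_succ_mono ν y hy)

/-- Vectors of column tops of ν-trees. -/
structure ColValid (ν : List Bool) (c : ℕ → ℕ) : Prop where
  zero : c 0 = northSteps ν
  low : ∀ x ≤ eastSteps ν, heightAt ν x ≤ c x
  high : ∀ x ≤ eastSteps ν, c x ≤ northSteps ν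
  comp : ∀ x z, x < z → z ≤ eastSteps ν → heightAt ν z ≤ c x → c z ≤ c x

/-- The tree with given column tops. -/
def treeOf (ν : List Bool) (c : ℕ → ℕ) : Set (ℕ × ℕ) :=
  {p | p.1 ≤ eastSteps ν ∧ heightAt ν p.1 ≤ p.2 ∧ p.2 ≤ c p.1 ∧
    (∀ x, x < p.1 → heightAt ν p.1 ≤ c x → p.2 ≤ c x) ∧
    (∀ z, p.1 < z → z ≤ eastSteps ν → heightAt ν z ≤ p.2 → c z ≤ p.2)}

theorem mem_treeOf {ν : List Bool} {c : ℕ → ℕ} {a b : ℕ} : (a, b) ∈ treeOf ν c ↔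
    a ≤ eastSteps ν ∧ heightAt ν a ≤ b ∧ b ≤ c a ∧
    (∀ x, x < a → heightAt ν a ≤ c x → b ≤ c x) ∧
    (∀ z, a < z → z ≤ eastSteps ν → heightAt ν z ≤ b → c z ≤ b) := Iff.rfl

theorem mem_APts {ν : List Bool} {a b : ℕ} : (a, b) ∈ APts ν ↔
    a ≤ eastSteps ν ∧ heightAt ν a ≤ b ∧ b ≤ northSteps ν := Iff.rfl

theorem compat_use {ν : List Bool} {T : Set (ℕ × ℕ)} (hT : T ⊆ APts ν)
    (hp : T.Pairwise (Compatible ν)) {a b a' b' : ℕ} (h : (a, b) ∈ T) (h' : (a', b') ∈ T)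
    (hlt : a < a') (hh : heightAt ν a' ≤ b) : b' ≤ b := by
  by_contra hb
  push Not at hb
  have hne : (a, b) ≠ (a', b') := by
    intro he; simp at he; omega
  refine hp h h' hne (Or.inl ⟨hlt, hb, ?_⟩)
  exact mem_APts.2 ⟨(mem_APts.1 (hT h')).1, hh, (mem_APts.1 (hT h)).2.2⟩

theorem pairwise_of {ν : List Bool} {T : Set (ℕ × ℕ)}
    (H : ∀ a b a' b', (a, b) ∈ T → (a', b') ∈ T → a < a' → heightAt ν a' ≤ b → b' ≤ b) :
    T.Pairwise (Compatible ν) := by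
  rintro ⟨a, b⟩ h ⟨a', b'⟩ h' - (⟨h1, h2, h3⟩ | ⟨h1, h2, h3⟩)
  · have := H _ _ _ _ h h' h1 (mem_APts.1 h3).2.1
    simp at h2; omega
  · have := H _ _ _ _ h' h h1 (mem_APts.1 h3).2.1
    simp at h2; omega

theorem top_mem {ν : List Bool} {c : ℕ → ℕ} (hc : ColValid ν c) {x : ℕ} (hx : x ≤ eastSteps ν) :
    (x, c x) ∈ treeOf ν c :=
  mem_treeOf.2 ⟨hx, hc.low x hx, le_rfl, fun a ha h => hc.comp a x ha hx h,
    fun z hz hz' h => hc.comp x z hz hz' h⟩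

/-- Left neighbour of a column top in its row. -/
theorem left_nb {ν : List Bool} {c : ℕ → ℕ} (hc : ColValid ν c) {x : ℕ} (hx : x ≤ eastSteps ν)
    (h0 : 0 < x) : ∃ a < x, c x ≤ c a ∧ (∀ a', a < a' → a' < x → c a' < c x) ∧
      (a, c x) ∈ treeOf ν c := by
  obtain ⟨a, ⟨ha1, ha2⟩, ha3⟩ : ∃ a, (a < x ∧ c x ≤ c a) ∧ ∀ a', a < a' → a' < x → c a' < c x := by
    have hne : ((Finset.range x).filter fun a => c x ≤ c a).Nonempty :=
      ⟨0, by simp [h0, hc.zero, hc.high x hx]⟩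
    have hmm := Finset.mem_filter.1 (Finset.max'_mem _ hne)
    refine ⟨_, ⟨Finset.mem_range.1 hmm.1, hmm.2⟩, ?_⟩
    intro a' h1 h2
    by_contra h3
    have := Finset.le_max' ((Finset.range x).filter fun a => c x ≤ c a) a' (by simp; omega)
    omega
  refine ⟨a, ha1, ha2, ha3, mem_treeOf.2 ⟨by omega, ?_, ha2, ?_, ?_⟩⟩
  · exact (heightAt_mono ν ha1.le hx).trans (hc.low x hx)
  · intro w hw hh
    exact ha2.trans (hc.comp w a hw (by omega) hh)
  · intro z hz hz' hh
    rcases lt_trichotomy z x with h | h | h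
    · exact (ha3 z hz h).le
    · rw [h]
    · exact hc.comp x z h hz' hh

theorem treeOf_sub {ν : List Bool} {c : ℕ → ℕ} (hc : ColValid ν c) : treeOf ν c ⊆ APts ν := by
  rintro ⟨a, b⟩ h
  obtain ⟨h1, h2, h3, -, -⟩ := mem_treeOf.1 h
  exact mem_APts.2 ⟨h1, h2, h3.trans (hc.high a h1)⟩

theorem treeOf_isNuTree {ν : List Bool} {c : ℕ → ℕ} (hc : ColValid ν c) :
    IsNuTree ν (treeOf ν c) := by
  refine ⟨treeOf_sub hc, pairwise_of ?_, ?_⟩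
  · intro a b a' b' h h' hlt hh
    obtain ⟨h1, h2, h3, h4, h5⟩ := mem_treeOf.1 h
    obtain ⟨h1', h2', h3', h4', h5'⟩ := mem_treeOf.1 h'
    exact h3'.trans (h5 a' hlt h1' hh)
  · intro T' hT' hp hsub
    refine Set.Subset.antisymm ?_ hsub
    rintro ⟨a, b⟩ h
    obtain ⟨ha, hl, hn⟩ := mem_APts.1 (hT' h)
    refine mem_treeOf.2 ⟨ha, hl, ?_, ?_, ?_⟩
    · rcases Nat.eq_zero_or_pos a with h0 | h0
      · rw [h0, hc.zero]; exact hn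
      · obtain ⟨w, hw, -, -, hm⟩ := left_nb hc ha h0
        exact compat_use hT' hp (hsub hm) h hw (hc.low a ha)
    · intro x hx hh
      exact compat_use hT' hp (hsub (top_mem hc (by omega : x ≤ eastSteps ν))) h hx hh
    · intro z hz hz' hh
      exact compat_use hT' hp h (hsub (top_mem hc hz')) hz hh

theorem mem_of_compat {ν : List Bool} {T : Set (ℕ × ℕ)} (hT : IsNuTree ν T) {a b : ℕ}
    (hA : (a, b) ∈ APts ν)
    (hl : ∀ x y, (x, y) ∈ T → x < a → heightAt ν a ≤ y → b ≤ y)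
    (hr : ∀ x y, (x, y) ∈ T → a < x → heightAt ν x ≤ b → y ≤ b) : (a, b) ∈ T := by
  have := hT.2.2 (insert (a, b) T) (Set.insert_subset hA hT.1) (pairwise_of ?_)
    (Set.subset_insert _ _)
  · rw [← this]; exact Set.mem_insert _ _
  · intro p q p' q' h h' hlt hh
    rcases h with h | h <;> rcases h' with h' | h'
    · simp at h h'; omega
    · simp at h; obtain ⟨rfl, rfl⟩ := h; exact hr _ _ h' hlt hh
    · simp at h'; obtain ⟨rfl, rfl⟩ := h'; exact hl _ _ h hlt hh
    · exact compat_use hT.1 hT.2.1 h h' hlt hh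

theorem exists_cols {ν : List Bool} {T : Set (ℕ × ℕ)} (hT : IsNuTree ν T) :
    ∃ c, ColValid ν c ∧ T = treeOf ν c := by
  have h0 : (0, northSteps ν) ∈ T := by
    refine mem_of_compat hT (mem_APts.2 ⟨by omega, by simp [heightAt_zero], le_rfl⟩) ?_ ?_
    · intro x y h hx; omega
    · intro x y h _ _; exact (mem_APts.1 (hT.1 h)).2.2
  have hcol : ∀ x, x ≤ eastSteps ν → ∃ y, (x, y) ∈ T := by
    intro x hx
    rcases Nat.eq_zero_or_pos x with rfl | hpos
    · exact ⟨_, h0⟩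
    have hex : ∃ y, heightAt ν x ≤ y ∧ ∃ a, a < x ∧ (a, y) ∈ T :=
      ⟨northSteps ν, heightAt_le_north ν x, 0, hpos, h0⟩
    obtain ⟨y, ⟨hy, a, ha, haT⟩, hmin⟩ : ∃ y, (heightAt ν x ≤ y ∧ ∃ a, a < x ∧ (a, y) ∈ T) ∧
        ∀ z, (heightAt ν x ≤ z ∧ ∃ a, a < x ∧ (a, z) ∈ T) → y ≤ z :=
      ⟨Nat.find hex, Nat.find_spec hex, fun z hz => Nat.find_min' hex hz⟩
    refine ⟨y, mem_of_compat hT (mem_APts.2 ⟨hx, hy, (mem_APts.1 (hT.1 haT)).2.2⟩) ?_ ?_⟩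
    · intro w z hwz hw hh
      exact hmin z ⟨hh, w, hw, hwz⟩
    · intro w z hwz hw hh
      exact compat_use hT.1 hT.2.1 haT hwz (by omega) hh
  have htop : ∀ x, ∃ y, x ≤ eastSteps ν → (x, y) ∈ T ∧ ∀ z, (x, z) ∈ T → z ≤ y := by
    intro x
    by_cases hx : x ≤ eastSteps ν
    · obtain ⟨y, hy⟩ := hcol x hx
      let P : ℕ → Prop := fun y => (x, y) ∈ T
      have hb : ∀ z, P z → z ≤ northSteps ν := fun z hz => (mem_APts.1 (hT.1 hz)).2.2
      refine ⟨Nat.findGreatest P (northSteps ν), fun _ => ⟨?_, ?_⟩⟩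
      · exact Nat.findGreatest_spec (P := P) (hb y hy) hy
      · intro z hz
        exact Nat.le_findGreatest (hb z hz) hz
    · exact ⟨0, fun h => absurd h hx⟩
  choose c hc using htop
  have hcv : ColValid ν c := by
    refine ⟨?_, ?_, ?_, ?_⟩
    · have h1 := (hc 0 (by omega)).2 _ h0
      have h2 := (mem_APts.1 (hT.1 (hc 0 (by omega)).1)).2.2
      omega
    · intro x hx; exact (mem_APts.1 (hT.1 (hc x hx).1)).2.1
    · intro x hx; exact (mem_APts.1 (hT.1 (hc x hx).1)).2.2
    · intro x z hxz hz hh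
      exact compat_use hT.1 hT.2.1 (hc x (by omega)).1 (hc z hz).1 hxz hh
  refine ⟨c, hcv, ?_⟩
  symm
  refine hT.2.2 _ (treeOf_sub hcv) (treeOf_isNuTree hcv).2.1 ?_
  rintro ⟨a, b⟩ h
  obtain ⟨ha, hl, hn⟩ := mem_APts.1 (hT.1 h)
  refine mem_treeOf.2 ⟨ha, hl, (hc a ha).2 b h, ?_, ?_⟩
  · intro x hx hh
    exact compat_use hT.1 hT.2.1 (hc x (by omega)).1 h hx hh
  · intro z hz hz' hh
    exact compat_use hT.1 hT.2.1 h (hc z hz').1 hz hh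

theorem rot_up {T T' : Set (ℕ × ℕ)} (h : IsRightRotation T T') {x y : ℕ} (hx : (x, y) ∈ T) :
    ∃ z, y ≤ z ∧ (x, z) ∈ T' := by
  obtain ⟨q, q', a, b, a', b', -, -, h1, h2, h3, h4, h5, -, -, -, -, rfl⟩ := h
  by_cases he : (x, y) = (a, b)
  · simp at he
    obtain ⟨rfl, rfl⟩ := he
    refine ⟨b', h2.le, Or.inl ⟨h4, ?_⟩⟩
    simp; omega
  · exact ⟨y, le_rfl, Or.inl ⟨hx, he⟩⟩

theorem treeLE_up {ν : List Bool} {T T' : Set (ℕ × ℕ)} (h : TreeLE ν T T') {x y : ℕ}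
    (hx : (x, y) ∈ T) : ∃ z, y ≤ z ∧ (x, z) ∈ T' := by
  induction h with
  | refl => exact ⟨y, le_rfl, hx⟩
  | tail _ h2 ih =>
    obtain ⟨z, hz, hm⟩ := ih
    obtain ⟨w, hw, hm'⟩ := rot_up h2.2.2 hm
    exact ⟨w, hz.trans hw, hm'⟩

theorem le_of_treeLE {ν : List Bool} {c d : ℕ → ℕ} (hc : ColValid ν c)
    (h : TreeLE ν (treeOf ν c) (treeOf ν d)) : ∀ x ≤ eastSteps ν, c x ≤ d x := by
  intro x hx
  obtain ⟨z, hz, hm⟩ := treeLE_up h (top_mem hc hx)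
  exact hz.trans (mem_treeOf.1 hm).2.2.1

theorem exists_rot {ν : List Bool} {c d : ℕ → ℕ} (hc : ColValid ν c) (hd : ColValid ν d)
    (hle : ∀ x ≤ eastSteps ν, c x ≤ d x) {s : ℕ} (hs : s ≤ eastSteps ν) (hlt : c s < d s)
    (hmin : ∀ x < s, c x = d x) :
    ∃ v, c s < v ∧ v ≤ d s ∧ ColValid ν (Function.update c s v) ∧
      IsRightRotation (treeOf ν c) (treeOf ν (Function.update c s v)) := by
  have hs0 : 0 < s := by
    rcases Nat.eq_zero_or_pos s with rfl | h
    · rw [hc.zero, hd.zero] at hlt; omega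
    · exact h
  obtain ⟨a, has, hca, hbet, hq⟩ := left_nb hc hs hs0
  have hsl := hc.low s hs
  have hmon := heightAt_mono ν has.le hs
  have hda : d s ≤ c a := by
    rw [hmin a has]
    refine hd.comp a s has hs ?_
    rw [← hmin a has]; omega
  have hds : (a, d s) ∈ treeOf ν c := by
    refine mem_treeOf.2 ⟨by omega, by omega, hda, ?_, ?_⟩
    · intro x hx hh
      exact hda.trans (hc.comp x a hx (by omega) hh)
    · intro z hz hz' hh
      rcases lt_trichotomy z s with h | h | h
      · have := hbet z hz h; omega
      · rw [h]; exact hlt.le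
      · exact (hle z hz').trans (hd.comp s z h hz' hh)
  have hex : ∃ v, c s < v ∧ (a, v) ∈ treeOf ν c := ⟨_, hlt, hds⟩
  obtain ⟨v, ⟨hv, hvm⟩, hvmin⟩ : ∃ v, (c s < v ∧ (a, v) ∈ treeOf ν c) ∧
      ∀ z, (c s < z ∧ (a, z) ∈ treeOf ν c) → v ≤ z :=
    ⟨Nat.find hex, Nat.find_spec hex, fun z hz => Nat.find_min' hex hz⟩
  have hvd : v ≤ d s := hvmin _ ⟨hlt, hds⟩
  obtain ⟨-, -, hva, hvl, hvr⟩ := mem_treeOf.1 hvm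
  have hT := treeOf_isNuTree hc
  have hus : Function.update c s v s = v := by simp
  have hun : ∀ x, x ≠ s → Function.update c s v x = c x := fun x hx => by simp [hx]
  have hcv : ColValid ν (Function.update c s v) := by
    refine ⟨?_, ?_, ?_, ?_⟩
    · rw [hun 0 (by omega), hc.zero]
    · intro x hx
      by_cases h : x = s
      · subst h; rw [hus]; omega
      · rw [hun x h]; exact hc.low x hx
    · intro x hx
      by_cases h : x = s
      · subst h; rw [hus]; exact hvd.trans (hd.high x hx)
      · rw [hun x h]; exact hc.high x hx
    · intro x z hxz hz hh
      by_cases h : x = s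
      · subst h; rw [hus] at hh ⊢; rw [hun z (by omega)]
        exact hvr z (by omega) hz hh
      · rw [hun x h] at hh ⊢
        by_cases h' : z = s
        · subst h'; rw [hus]
          rcases lt_trichotomy x a with h1 | h1 | h1
          · exact hva.trans (hc.comp x a h1 (by omega) (by omega))
          · rw [h1]; exact hva
          · have h2 := hbet x h1 hxz
            have h3 := hc.comp x z hxz hz hh
            omega
        · rw [hun z h']; exact hc.comp x z hxz hz hh
  refine ⟨v, hv, hvd, hcv, (a, c s), (s, v), a, c s, s, v, rfl, rfl, has, hv, hq, hvm,
    top_mem hc hs, ?_, ?_, ?_, ?_, ?_⟩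
  · intro b h1 h2 h3
    have := hvmin b ⟨h1, h3⟩; omega
  · intro w h1 h2 h3
    have := hbet w h1 h2
    have := (mem_treeOf.1 h3).2.2.1; omega
  · intro w h1 h2 h3
    have := hbet w h1 h2
    have := (mem_treeOf.1 h3).2.2.1; omega
  · intro b h1 h2 h3
    have := (mem_treeOf.1 h3).2.2.1; omega
  · apply Set.Subset.antisymm
    · rintro ⟨p, r⟩ h
      by_cases he : (p, r) = (s, v)
      · exact Or.inr he
      left
      obtain ⟨h1, h2, h3, h4, h5⟩ := mem_treeOf.1 h
      refine ⟨mem_treeOf.2 ⟨h1, h2, ?_, ?_, ?_⟩, ?_⟩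
      · by_cases hp : p = s
        · subst hp
          rw [hus] at h3
          have hrv : r ≠ v := by rintro rfl; exact he rfl
          by_contra hcon
          have : (a, r) ∈ treeOf ν c := by
            refine mem_treeOf.2 ⟨by omega, by omega, by omega, ?_, ?_⟩
            · intro x hx hh
              have := hc.comp x a hx (by omega) hh
              omega
            · intro z hz hz' hh
              rcases lt_trichotomy z p with h | h | h
              · have := hbet z hz h; omega
              · rw [h]; omega
              · have := h5 z h hz' hh
                rwa [hun z (by omega)] at this
          have := hvmin r ⟨by omega, this⟩
          omega
        · rwa [hun p hp] at h3
      · intro x hx hh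
        by_cases hxs : x = s
        · subst hxs
          have := hc.comp x p hx h1 hh
          rw [hun p (by omega)] at h3
          omega
        · have := h4 x hx
          rw [hun x hxs] at this
          exact this hh
      · intro z hz hz' hh
        have := h5 z hz hz' hh
        by_cases hzs : z = s
        · subst hzs; rw [hus] at this; omega
        · rwa [hun z hzs] at this
      · intro hpr
        simp at hpr
        obtain ⟨rfl, rfl⟩ := hpr
        have := h5 s has hs hsl
        rw [hus] at this; omega
    · rintro ⟨p, r⟩ (⟨h, hne⟩ | h)
      · obtain ⟨h1, h2, h3, h4, h5⟩ := mem_treeOf.1 h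
        refine mem_treeOf.2 ⟨h1, h2, ?_, ?_, ?_⟩
        · by_cases hp : p = s
          · subst hp; rw [hus]; omega
          · rwa [hun p hp]
        · intro x hx hh
          by_cases hxs : x = s
          · subst hxs
            rw [hus] at hh ⊢
            exact compat_use hT.1 hT.2.1 hvm h (by omega) hh
          · rw [hun x hxs] at hh ⊢
            exact h4 x hx hh
        · intro z hz hz' hh
          by_cases hzs : z = s
          · subst hzs
            rw [hus]
            have h6 := h5 z hz hz' hh
            rcases lt_trichotomy p a with hp | hp | hp
            · exact compat_use hT.1 hT.2.1 h hvm hp (by omega)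
            · subst hp
              rcases Nat.eq_or_lt_of_le h6 with h7 | h7
              · exact absurd (by simp [h7]) hne
              · exact hvmin r ⟨h7, h⟩
            · have := hbet p hp hz; omega
          · rw [hun z hzs]; exact h5 z hz hz' hh
      · simp at h
        obtain ⟨rfl, rfl⟩ := h
        have := top_mem hcv hs
        rwa [hus] at this

theorem treeOf_congr {ν : List Bool} {c d : ℕ → ℕ} (h : ∀ x ≤ eastSteps ν, c x = d x) :
    treeOf ν c ⊆ treeOf ν d := by
  rintro ⟨p, r⟩ hm
  obtain ⟨h1, h2, h3, h4, h5⟩ := mem_treeOf.1 hm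
  refine mem_treeOf.2 ⟨h1, h2, by rwa [← h p h1], ?_, ?_⟩
  · intro x hx
    rw [← h x (by omega)]; exact h4 x hx
  · intro z hz hz'
    rw [← h z hz']; exact h5 z hz hz'

theorem treeLE_of_le {ν : List Bool} {d : ℕ → ℕ} (hd : ColValid ν d) : ∀ (k : ℕ) (c : ℕ → ℕ),
    ColValid ν c → (∀ x ≤ eastSteps ν, c x ≤ d x) →
    ∑ x ∈ Finset.range (eastSteps ν + 1), (d x - c x) ≤ k →
    TreeLE ν (treeOf ν c) (treeOf ν d) := by
  intro k
  induction k with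
  | zero =>
    intro c hc hle hk
    have hk' : ∑ x ∈ Finset.range (eastSteps ν + 1), (d x - c x) = 0 := by omega
    rw [Finset.sum_eq_zero_iff] at hk'
    have heq : ∀ x ≤ eastSteps ν, c x = d x := by
      intro x hx
      have h1 := hk' x (by simp; omega)
      have h2 := hle x hx
      omega
    rw [Set.Subset.antisymm (treeOf_congr heq) (treeOf_congr fun x hx => (heq x hx).symm)]
    exact Relation.ReflTransGen.refl
  | succ k ih =>
    intro c hc hle hk
    by_cases hex : ∃ s, s ≤ eastSteps ν ∧ c s < d s
    · obtain ⟨s, ⟨hs, hlt⟩, hmin⟩ : ∃ s, (s ≤ eastSteps ν ∧ c s < d s) ∧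
          ∀ z < s, ¬ (z ≤ eastSteps ν ∧ c z < d z) :=
        ⟨Nat.find hex, Nat.find_spec hex, fun z hz => Nat.find_min hex hz⟩
      obtain ⟨v, hv, hvd, hcv, hrot⟩ := exists_rot hc hd hle hs hlt (by
        intro x hx
        have h1 := hmin x hx
        have h2 := hle x (by omega)
        omega)
      refine Relation.ReflTransGen.head ⟨treeOf_isNuTree hc, treeOf_isNuTree hcv, hrot⟩
        (ih _ hcv ?_ ?_)
      · intro x hx
        by_cases h : x = s
        · subst h; simpa using hvd
        · simpa [h] using hle x hx
      · have : ∑ x ∈ Finset.range (eastSteps ν + 1), (d x - Function.update c s v x) <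
            ∑ x ∈ Finset.range (eastSteps ν + 1), (d x - c x) := by
          apply Finset.sum_lt_sum
          · intro x _
            by_cases h : x = s
            · subst h; simp; omega
            · simp [h]
          · exact ⟨s, by simp; omega, by simp; omega⟩
        omega
    · push Not at hex
      have heq : ∀ x ≤ eastSteps ν, c x = d x := fun x hx => le_antisymm (hle x hx) (hex x hx)
      rw [Set.Subset.antisymm (treeOf_congr heq) (treeOf_congr fun x hx => (heq x hx).symm)]
      exact Relation.ReflTransGen.refl

theorem treeLE_iff {ν : List Bool} {c d : ℕ → ℕ} (hc : ColValid ν c) (hd : ColValid ν d) :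
    TreeLE ν (treeOf ν c) (treeOf ν d) ↔ ∀ x ≤ eastSteps ν, c x ≤ d x :=
  ⟨le_of_treeLE hc, fun h => treeLE_of_le hd _ c hc h le_rfl⟩

/-- Nonempty families of column vectors have a greatest lower bound, computed pointwise. -/
theorem exists_inf {ν : List Bool} (F : (ℕ → ℕ) → Prop) (hF : ∀ c, F c → ColValid ν c)
    (hne : ∃ c, F c) : ∃ e, ColValid ν e ∧ (∀ c, F c → ∀ x, e x ≤ c x) ∧
      ∀ x, ∃ c, F c ∧ e x = c x := by
  have hx : ∀ x, ∃ y, (∃ c, F c ∧ y = c x) ∧ ∀ c, F c → y ≤ c x := by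
    intro x
    obtain ⟨c0, h0⟩ := hne
    have hex : ∃ y, ∃ c, F c ∧ y = c x := ⟨_, c0, h0, rfl⟩
    exact ⟨Nat.find hex, Nat.find_spec hex, fun c hc => Nat.find_min' hex ⟨c, hc, rfl⟩⟩
  choose e he hle using hx
  refine ⟨e, ⟨?_, ?_, ?_, ?_⟩, fun c hc x => hle x c hc, he⟩
  · obtain ⟨c, hc, h⟩ := he 0
    rw [h, (hF c hc).zero]
  · intro x hx
    obtain ⟨c, hc, h⟩ := he x
    rw [h]; exact (hF c hc).low x hx
  · intro x hx
    obtain ⟨c, hc, h⟩ := he x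
    rw [h]; exact (hF c hc).high x hx
  · intro x z hxz hz hh
    obtain ⟨c, hc, h⟩ := he x
    rw [h] at hh ⊢
    exact (hle z c hc).trans ((hF c hc).comp x z hxz hz hh)

theorem colValid_top (ν : List Bool) : ColValid ν fun _ => northSteps ν :=
  ⟨rfl, fun x _ => heightAt_le_north ν x, fun _ _ => le_rfl, fun _ _ _ _ _ => le_rfl⟩

theorem rotation_poset_is_lattice (ν : List Bool) (T₁ T₂ : Set (ℕ × ℕ))
    (h₁ : IsNuTree ν T₁) (h₂ : IsNuTree ν T₂) :
    (∃ M, IsNuTree ν M ∧ TreeLE ν M T₁ ∧ TreeLE ν M T₂ ∧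
      ∀ S, IsNuTree ν S → TreeLE ν S T₁ → TreeLE ν S T₂ → TreeLE ν S M) ∧
    (∃ J, IsNuTree ν J ∧ TreeLE ν T₁ J ∧ TreeLE ν T₂ J ∧
      ∀ S, IsNuTree ν S → TreeLE ν T₁ S → TreeLE ν T₂ S → TreeLE ν J S) := by
  obtain ⟨c, hc, rfl⟩ := exists_cols h₁
  obtain ⟨d, hd, rfl⟩ := exists_cols h₂
  constructor
  · obtain ⟨e, he, hle, hat⟩ := exists_inf (ν := ν) (fun f => f = c ∨ f = d)
      (by rintro f (rfl | rfl) <;> assumption) ⟨c, Or.inl rfl⟩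
    refine ⟨treeOf ν e, treeOf_isNuTree he, (treeLE_iff he hc).2 fun x _ => hle c (Or.inl rfl) x,
      (treeLE_iff he hd).2 fun x _ => hle d (Or.inr rfl) x, ?_⟩
    intro S hS h1 h2
    obtain ⟨s, hs, rfl⟩ := exists_cols hS
    rw [treeLE_iff hs hc] at h1
    rw [treeLE_iff hs hd] at h2
    rw [treeLE_iff hs he]
    intro x hx
    obtain ⟨f, rfl | rfl, h⟩ := hat x
    · rw [h]; exact h1 x hx
    · rw [h]; exact h2 x hx
  · obtain ⟨e, he, hle, hat⟩ := exists_inf (ν := ν)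
      (fun f => ColValid ν f ∧ ∀ x ≤ eastSteps ν, c x ≤ f x ∧ d x ≤ f x)
      (fun f hf => hf.1)
      ⟨_, colValid_top ν, fun x hx => ⟨hc.high x hx, hd.high x hx⟩⟩
    refine ⟨treeOf ν e, treeOf_isNuTree he, (treeLE_iff hc he).2 ?_, (treeLE_iff hd he).2 ?_, ?_⟩
    · intro x hx
      obtain ⟨f, hf, h⟩ := hat x
      rw [h]; exact (hf.2 x hx).1
    · intro x hx
      obtain ⟨f, hf, h⟩ := hat x
      rw [h]; exact (hf.2 x hx).2
    · intro S hS h1 h2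
      obtain ⟨s, hs, rfl⟩ := exists_cols hS
      rw [treeLE_iff hc hs] at h1
      rw [treeLE_iff hd hs] at h2
      rw [treeLE_iff he hs]
      intro x _
      exact hle s ⟨hs, fun x hx => ⟨h1 x hx, h2 x hx⟩⟩ x
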